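/- arXiv:1907.03913 — 3 statements merged into one kernel-verified Lean document; each statement's English description precedes it below -/
import Mathlib

section
/- Let n ≥ 4 be an even integer. If G is an n-vertex 3-chromatic 2-connected simple graph, then i_2(G) ≤ C(n,2) − (n+1), with equality if and only if G is isomorphic to a theta graph θ_{a,b,c} with a + b + c = n + 1 in which at least one of a, b, c is even. -/
open SimpleGraph

/-- The number of independent sets of size `t` in `G`. -/
noncomputable def numIndepSize {V : Type*} [Fintype V] (G : SimpleGraph V) (t : ℕ) : ℕ :=
  Nat.card {s : Finset V // s.card = t ∧ ∀ a ∈ s, ∀ b ∈ s, ¬ G.Adj a b}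

/-- `G` is `ℓ`-connected: it has more than `ℓ` vertices and deleting any set of fewer than
`ℓ` vertices leaves a connected graph. -/
def LConnected {V : Type*} [Fintype V] (G : SimpleGraph V) (ℓ : ℕ) : Prop :=
  ℓ < Fintype.card V ∧
    ∀ s : Finset V, s.card < ℓ → (G.induce ((↑s : Set V)ᶜ)).Connected

/-- `G` is (equal to) the theta graph `θ_{a,b,c}`: there are two distinct vertices `v`, `w`
joined by three internally disjoint, pairwise edge-disjoint paths of lengths `a`, `b`, `c`,
and these paths exhaust all vertices and edges of `G`. -/
def IsTheta {V : Type*} (G : SimpleGraph V) (a b c : ℕ) : Prop :=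
  ∃ (v w : V) (_ : v ≠ w) (p q r : G.Walk v w),
    p.IsPath ∧ q.IsPath ∧ r.IsPath ∧
    p.length = a ∧ q.length = b ∧ r.length = c ∧
    (∀ x, x ∈ p.support → x ∈ q.support → x = v ∨ x = w) ∧
    (∀ x, x ∈ p.support → x ∈ r.support → x = v ∨ x = w) ∧
    (∀ x, x ∈ q.support → x ∈ r.support → x = v ∨ x = w) ∧
    p.edges.Disjoint q.edges ∧ p.edges.Disjoint r.edges ∧ q.edges.Disjoint r.edges ∧
    (∀ x : V, x ∈ p.support ∨ x ∈ q.support ∨ x ∈ r.support) ∧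
    (∀ e ∈ G.edgeSet, e ∈ p.edges ∨ e ∈ q.edges ∨ e ∈ r.edges)

lemma aux_path_edge {V : Type*} {G : SimpleGraph V} {u v : V} (p : G.Walk v u) (hp : p.IsPath)
    (h : s(u, v) ∈ p.edges) : p.length = 1 := by
  cases p with
  | nil => simp at h
  | cons hh p' =>
    rw [Walk.cons_isPath_iff] at hp
    rw [Walk.edges_cons, List.mem_cons] at h
    rcases h with h | h
    · rw [Sym2.eq_swap, Sym2.congr_right] at h
      subst h
      have := Walk.isPath_iff_nil.1 hp.1
      simp [Walk.length_eq_zero_iff.2 this]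
    · exact absurd (p'.snd_mem_support_of_mem_edges h) hp.2

lemma aux_odd_cycle {V : Type*} {G : SimpleGraph V} (m : ℕ) : ∀ (u : V) (w : G.Walk u u),
    w.length = m → Odd w.length → ∃ (x : V) (c : G.Walk x x), c.IsCycle ∧ Odd c.length := by
  induction m using Nat.strong_induction_on with
  | _ m ih =>
  intro u w hm ho
  cases w with
  | nil => simp at ho
  | cons h p =>
    by_cases hp : p.IsPath
    · refine ⟨u, Walk.cons h p, ?_, ho⟩
      rw [Walk.cons_isCycle_iff]
      refine ⟨hp, fun he => ?_⟩
      have := aux_path_edge p hp he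
      simp [this] at ho
      exact absurd ho (by decide)
    · rw [Walk.isPath_iff_isSubwalk_imp_nil] at hp
      push Not at hp
      obtain ⟨x, c, ⟨a, b, hab⟩, hc⟩ := hp
      have hc0 : c.length ≠ 0 := fun h0 => hc (Walk.length_eq_zero_iff.1 h0)
      have hl : p.length = a.length + c.length + b.length := by rw [hab]; simp
      simp only [Walk.length_cons] at hm ho
      by_cases hco : Odd c.length
      · exact ih c.length (by omega) x c rfl hco
      · refine ih _ ?_ u (Walk.cons h (a.append b)) rfl ?_
        · simp; omega
        · simp only [Walk.length_cons, Walk.length_append]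
          grind

lemma aux_first_hit {V : Type*} {G : SimpleGraph V} (S : Set V) {x t : V} (p : G.Walk x t)
    (ht : t ∈ S) : ∃ (z : V) (q : G.Walk x z), z ∈ S ∧ q.IsPath ∧ q.support ⊆ p.support ∧
      ∀ u ∈ q.support, u ∈ S → u = z := by
  classical
  suffices h : ∃ (z : V) (q : G.Walk x z), z ∈ S ∧ q.support ⊆ p.support ∧
      ∀ u ∈ q.support, u ∈ S → u = z by
    obtain ⟨z, q, h1, h2, h3⟩ := h
    exact ⟨z, q.bypass, h1, q.bypass_isPath, fun _ h => h2 (q.support_bypass_subset_support h),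
      fun u hu => h3 u (q.support_bypass_subset_support hu)⟩
  induction p with
  | nil => exact ⟨_, Walk.nil, ht, by simp, by simp⟩
  | @cons a b c h p ih =>
    by_cases ha : a ∈ S
    · exact ⟨a, Walk.nil, ha, by simp, by simp⟩
    · obtain ⟨z, q, h1, h2, h3⟩ := ih ht
      refine ⟨z, Walk.cons h q, h1, ?_, ?_⟩
      · simp only [Walk.support_cons]
        exact List.cons_subset_cons _ h2
      · intro u hu huS
        simp only [Walk.support_cons, List.mem_cons] at hu
        rcases hu with rfl | hu
        · exact absurd huS ha
        · exact h3 u hu huS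

lemma aux_min_degree {V : Type*} [Fintype V] (G : SimpleGraph V) [DecidableRel G.Adj]
    (hn : 4 ≤ Fintype.card V)
    (hconn : LConnected G 2) (v : V) : 2 ≤ G.degree v := by
  classical
  by_contra hlt
  have hs : (G.neighborFinset v).card < 2 := by
    rw [G.card_neighborFinset_eq_degree]; omega
  have hc := hconn.2 _ hs
  have hlt2 : (insert v (G.neighborFinset v)).card < Fintype.card V :=
    lt_of_le_of_lt (Finset.card_insert_le _ _) (by omega)
  obtain ⟨w, hw⟩ : ∃ w, w ∉ insert v (G.neighborFinset v) := by
    by_contra hh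
    push Not at hh
    rw [Finset.eq_univ_of_forall hh, Finset.card_univ] at hlt2
    omega
  simp only [Finset.mem_insert, not_or] at hw
  have hv : v ∈ ((↑(G.neighborFinset v) : Set V)ᶜ) := by simp
  have hw' : w ∈ ((↑(G.neighborFinset v) : Set V)ᶜ) := by simpa using hw.2
  have : Nontrivial ((↑(G.neighborFinset v) : Set V)ᶜ : Set V) :=
    ⟨⟨v, hv⟩, ⟨w, hw'⟩, fun h => hw.1 (by simpa using h.symm)⟩
  obtain ⟨u, hu⟩ := hc.preconnected.exists_adj_of_nontrivial ⟨v, hv⟩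
  have h1 : G.Adj v u := by simpa using hu
  exact u.2 (by simpa using h1)

lemma aux_connected {V : Type*} [Fintype V] (G : SimpleGraph V) 
    (hconn : LConnected G 2) : G.Connected := by
  have := hconn.2 ∅ (by simp)
  have h : ((↑(∅ : Finset V) : Set V)ᶜ) = Set.univ := by simp
  rw [h] at this
  exact (SimpleGraph.induceUnivIso G).connected_iff.1 this

lemma aux_indep {V : Type*} [Fintype V] [DecidableEq V] (G : SimpleGraph V) [DecidableRel G.Adj] :
    numIndepSize G 2 + G.edgeFinset.card = (Fintype.card V).choose 2 := by
  classical
  have h1 : numIndepSize G 2 = ((Finset.univ.powersetCard 2).filter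
      (fun s : Finset V => ∀ a ∈ s, ∀ b ∈ s, ¬ G.Adj a b)).card := by
    rw [numIndepSize, Nat.card_eq_fintype_card, Fintype.card_subtype]
    congr 1
    ext s
    simp [Finset.mem_powersetCard]
  have h2 : G.edgeFinset.card = ((Finset.univ.powersetCard 2).filter
      (fun s : Finset V => ¬ ∀ a ∈ s, ∀ b ∈ s, ¬ G.Adj a b)).card := by
    apply Finset.card_bij (fun e _ => e.toFinset)
    · intro e he
      simp only [Finset.mem_filter, Finset.mem_powersetCard, Finset.subset_univ, true_and]
      refine ⟨Sym2.card_toFinset_of_not_isDiag e (G.not_isDiag_of_mem_edgeFinset he), ?_⟩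
      induction e with
      | _ x y =>
        intro h
        exact h x (by simp) y (by simp) (by simpa using he)
    · intro e _ f _ h
      ext x
      rw [← Sym2.mem_toFinset, h, Sym2.mem_toFinset]
    · intro s hs
      simp only [Finset.mem_filter, Finset.mem_powersetCard, Finset.subset_univ, true_and] at hs
      obtain ⟨hc, hs⟩ := hs
      push Not at hs
      obtain ⟨a, ha, b, hb, hab⟩ := hs
      refine ⟨s(a, b), by simpa using hab, ?_⟩
      apply Finset.eq_of_subset_of_card_le
      · intro x hx
        simp only [Sym2.mem_toFinset, Sym2.mem_iff] at hx
        rcases hx with rfl | rfl <;> assumption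
      · rw [hc, Sym2.card_toFinset_of_not_isDiag]
        simpa using hab.ne
  rw [h1, h2, Finset.card_filter_add_card_filter_not, Finset.card_powersetCard, Finset.card_univ]

/-- A theta configuration inside `G` (not necessarily spanning) with an even path. -/
def HasTheta {V : Type*} (G : SimpleGraph V) : Prop :=
  ∃ (v w : V) (_ : v ≠ w) (p q r : G.Walk v w),
    p.IsPath ∧ q.IsPath ∧ r.IsPath ∧
    (∀ x, x ∈ p.support → x ∈ q.support → x = v ∨ x = w) ∧
    (∀ x, x ∈ p.support → x ∈ r.support → x = v ∨ x = w) ∧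
    (∀ x, x ∈ q.support → x ∈ r.support → x = v ∨ x = w) ∧
    p.edges.Disjoint q.edges ∧ p.edges.Disjoint r.edges ∧ q.edges.Disjoint r.edges ∧
    Odd (q.length + r.length)

lemma aux_cycle_split {V : Type*} {G : SimpleGraph V} {y z : V} (c : G.Walk y y)
    (hc : c.IsCycle) (hz : z ∈ c.support) (hyz : y ≠ z) :
    ∃ q r : G.Walk y z, q.IsPath ∧ r.IsPath ∧ q.edges.Disjoint r.edges ∧
      (∀ x, x ∈ q.support → x ∈ r.support → x = y ∨ x = z) ∧
      q.length + r.length = c.length ∧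
      (∀ x, x ∈ q.support → x ∈ c.support) ∧ (∀ x, x ∈ r.support → x ∈ c.support) := by
  classical
  have hsp := c.take_spec hz
  refine ⟨c.takeUntil z hz, (c.dropUntil z hz).reverse, hc.isPath_takeUntil hz, ?_, ?_, ?_, ?_,
    fun x hx => c.support_takeUntil_subset_support hz hx, fun x hx =>
      c.support_dropUntil_subset_support hz (by simpa using hx)⟩
  · rw [Walk.isPath_reverse_iff]
    rw [← hsp] at hc
    exact hc.isPath_of_append_right (Walk.not_nil_of_ne hyz)
  · simpa using hc.isTrail.disjoint_edges_takeUntil_dropUntil hz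
  · intro x hx hx'
    by_contra hcon
    push Not at hcon
    have hnd := hc.support_nodup
    rw [← hsp, Walk.tail_support_append] at hnd
    refine List.disjoint_of_nodup_append hnd (a := x) ?_ ?_
    · exact (Walk.mem_support_iff _).1 hx |>.resolve_left hcon.1
    · rw [Walk.support_reverse, List.mem_reverse] at hx'
      exact (Walk.mem_support_iff _).1 hx' |>.resolve_left hcon.2
  · rw [Walk.length_reverse, ← Walk.length_append, hsp]

lemma aux_hasTheta {V : Type*} [Fintype V] (G : SimpleGraph V) (heven : Even (Fintype.card V))
    (hchrom : G.chromaticNumber = 3) (hconn : LConnected G 2) : HasTheta G := by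
  classical
  obtain ⟨u, w, hw⟩ : ∃ (u : V) (w : G.Walk u u), Odd w.length := by
    by_contra hcon
    push Not at hcon
    have h2 : G.Colorable 2 := by
      rw [two_colorable_iff_forall_loop_even]
      intro u w
      simpa using hcon u w
    have := h2.chromaticNumber_le
    rw [hchrom] at this
    exact absurd this (by decide)
  obtain ⟨u, c, hc, hodd⟩ := aux_odd_cycle _ u w rfl hw
  have hcardc : c.support.toFinset.card ≤ c.length := by
    have : c.support.toFinset = c.support.tail.toFinset := by
      ext x
      simp only [List.mem_toFinset]
      refine ⟨fun hx => ?_, List.mem_of_mem_tail⟩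
      rcases (Walk.mem_support_iff _).1 hx with rfl | h
      · exact c.end_mem_tail_support hc.not_nil
      · exact h
    rw [this]
    refine (List.toFinset_card_le _).trans ?_
    simp
  have hcle : c.length ≤ Fintype.card V := by
    have : c.support.tail.length = c.length := by simp
    rw [← this]
    exact hc.support_nodup.length_le_card
  have hclt : c.length < Fintype.card V := by
    rcases hcle.lt_or_eq with h | h
    · exact h
    · rw [h] at hodd
      exact absurd heven (by simpa using hodd)
  obtain ⟨t, ht⟩ : ∃ t, t ∉ c.support := by
    by_contra hh
    push Not at hh
    have : c.support.toFinset = Finset.univ := Finset.eq_univ_of_forall (by simpa using hh)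
    rw [this, Finset.card_univ] at hcardc
    omega
  obtain ⟨W⟩ := (aux_connected G hconn).preconnected u t
  obtain ⟨d, -, hd1, hd2⟩ := W.exists_boundary_dart {x | x ∈ c.support}
    (by simp) (by simpa using ht)
  obtain ⟨⟨y, x⟩, hyx⟩ := d
  simp only [Set.mem_ofPred_eq] at hd1 hd2
  change G.Adj y x at hyx
  -- rotate
  obtain ⟨c', hc', hodd', hsupp⟩ : ∃ c' : G.Walk y y, c'.IsCycle ∧ Odd c'.length ∧
      x ∉ c'.support := 
    ⟨c.rotate y hd1, hc.rotate hd1, by simpa using hodd, by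
      rw [Walk.mem_support_rotate_iff]; exact hd2⟩
  -- another cycle vertex
  have hcy := hconn.2 {y} (by simp)
  have hsnd : c'.snd ∈ c'.support := c'.getVert_mem_support 1
  have hsne : G.Adj y c'.snd := c'.adj_snd hc'.not_nil
  have hx' : x ∈ ((↑({y} : Finset V) : Set V)ᶜ) := by simpa using hyx.ne'
  have hs' : c'.snd ∈ ((↑({y} : Finset V) : Set V)ᶜ) := by simpa using hsne.ne'
  obtain ⟨W2⟩ := hcy.preconnected ⟨x, hx'⟩ ⟨c'.snd, hs'⟩
  let W3 : G.Walk x c'.snd := W2.map (Embedding.induce _).toHom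
  have hW3 : y ∉ W3.support := by
    intro h
    have h2 : y ∈ (W2.map (Embedding.induce (G := G) _).toHom).support := h
    rw [Walk.support_map, List.mem_map] at h2
    obtain ⟨a, -, ha⟩ := h2
    have := a.2
    simp at this
    exact this ha
  obtain ⟨z, P, hzS, hP, hPs, hPz⟩ := aux_first_hit {v | v ∈ c'.support} W3 hsnd
  have hyP : y ∉ P.support := fun h => hW3 (hPs h)
  have hyz : y ≠ z := fun h => hyP (h ▸ P.end_mem_support)
  simp only [Set.mem_ofPred_eq] at hzS hPz
  have hxz : x ≠ z := fun h => hsupp (h ▸ hzS)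
  obtain ⟨q, r, hq, hr, hqr, hqr', hlen, hqc, hrc⟩ := aux_cycle_split c' hc' hzS hyz
  have key : ∀ q : G.Walk y z, (∀ x, x ∈ q.support → x ∈ c'.support) →
      (∀ v, v ∈ (Walk.cons hyx P).support → v ∈ q.support → v = y ∨ v = z) ∧
      (Walk.cons hyx P).edges.Disjoint q.edges := by
    intro q hqc
    refine ⟨fun v hv hvq => ?_, fun e he heq => ?_⟩
    · simp only [Walk.support_cons, List.mem_cons] at hv
      rcases hv with h | h
      · exact Or.inl h
      · exact Or.inr (hPz v h (hqc v hvq))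
    · simp only [Walk.edges_cons, List.mem_cons] at he
      rcases he with rfl | h
      · exact hsupp (hqc _ (q.snd_mem_support_of_mem_edges heq))
      · induction e with
        | _ a b =>
          have ha := hPz a (P.fst_mem_support_of_mem_edges h)
            (hqc _ (q.fst_mem_support_of_mem_edges heq))
          have hb := hPz b (P.snd_mem_support_of_mem_edges h)
            (hqc _ (q.snd_mem_support_of_mem_edges heq))
          have := P.adj_of_mem_edges h
          exact this.ne (ha.trans hb.symm)
  refine ⟨y, z, hyz, Walk.cons hyx P, q, r, ?_, hq, hr, (key q hqc).1, (key r hrc).1, hqr',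
    (key q hqc).2, (key r hrc).2, hqr, hlen ▸ hodd'⟩
  rw [Walk.cons_isPath_iff]
  exact ⟨hP, hyP⟩

lemma aux_supp_card {V : Type*} [DecidableEq V] {G : SimpleGraph V} {v w : V} (hvw : v ≠ w)
    (p q r : G.Walk v w) :
    (p.support.toFinset ∪ q.support.toFinset ∪ r.support.toFinset).card + 1 ≤
      p.length + q.length + r.length := by
  have key : ∀ p : G.Walk v w, ((p.support.toFinset.erase v).erase w).card + 1 ≤ p.length := by
    intro p
    have h1 : p.support.toFinset.card ≤ p.length + 1 := by
      simpa using List.toFinset_card_le p.support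
    rw [Finset.card_erase_of_mem (by simp [hvw.symm]), Finset.card_erase_of_mem (by simp)]
    have h2 : ({v, w} : Finset V).card ≤ p.support.toFinset.card :=
      Finset.card_le_card (by intro x; simp; rintro (rfl | rfl) <;> simp)
    rw [Finset.card_pair hvw] at h2
    omega
  have hsub : p.support.toFinset ∪ q.support.toFinset ∪ r.support.toFinset ⊆
      {v, w} ∪ ((p.support.toFinset.erase v).erase w ∪ (q.support.toFinset.erase v).erase w ∪
        (r.support.toFinset.erase v).erase w) := by
    intro x
    simp only [Finset.mem_union, Finset.mem_erase, Finset.mem_insert, Finset.mem_singleton]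
    tauto
  have h := Finset.card_le_card hsub
  have h1 := Finset.card_union_le ({v, w} : Finset V)
    ((p.support.toFinset.erase v).erase w ∪ (q.support.toFinset.erase v).erase w ∪
        (r.support.toFinset.erase v).erase w)
  have h2 := Finset.card_union_le
    ((p.support.toFinset.erase v).erase w ∪ (q.support.toFinset.erase v).erase w)
        ((r.support.toFinset.erase v).erase w)
  have h3 := Finset.card_union_le
    ((p.support.toFinset.erase v).erase w) ((q.support.toFinset.erase v).erase w)
  rw [Finset.card_pair hvw] at h1
  have := key p
  have := key q
  have := key r
  omega

lemma aux_edge_card {V : Type*} [DecidableEq V] {G : SimpleGraph V} {v w : V}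
    (p q r : G.Walk v w) (hp : p.IsPath) (hq : q.IsPath) (hr : r.IsPath)
    (h1 : p.edges.Disjoint q.edges) (h2 : p.edges.Disjoint r.edges)
    (h3 : q.edges.Disjoint r.edges) :
    (p.edges.toFinset ∪ q.edges.toFinset ∪ r.edges.toFinset).card =
      p.length + q.length + r.length := by
  rw [Finset.card_union_of_disjoint, Finset.card_union_of_disjoint,
    List.toFinset_card_of_nodup hp.isTrail.edges_nodup,
    List.toFinset_card_of_nodup hq.isTrail.edges_nodup,
    List.toFinset_card_of_nodup hr.isTrail.edges_nodup]
  · simp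
  · rw [List.disjoint_toFinset_iff_disjoint]; exact h1
  · rw [Finset.disjoint_union_left, List.disjoint_toFinset_iff_disjoint,
      List.disjoint_toFinset_iff_disjoint]
    exact ⟨h2, h3⟩

/-- Degree counting: a subgraph with more edges than vertices. -/
lemma aux_count {V : Type*} [Fintype V] [DecidableEq V] (G : SimpleGraph V) [DecidableRel G.Adj]
    (hG : G.Connected) (hdeg : ∀ v, 2 ≤ G.degree v) (S : Finset V) (hS : S.Nonempty)
    (E : Finset (Sym2 V)) (hE : E ⊆ G.edgeFinset) (hES : ∀ e ∈ E, ∀ x ∈ e, x ∈ S)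
    (hcard : S.card + 1 ≤ E.card) :
    Fintype.card V + 1 ≤ G.edgeFinset.card ∧
      (G.edgeFinset.card = Fintype.card V + 1 → S = Finset.univ) := by
  classical
  let H : SimpleGraph V := fromEdgeSet (E : Set (Sym2 V))
  have hHadj : ∀ a b, H.Adj a b ↔ s(a, b) ∈ E := by
    intro a b
    simp only [H, fromEdgeSet_adj, Finset.mem_coe, and_iff_left_iff_imp]
    intro h
    have := hE h
    simp at this
    exact this.ne
  have hle : H ≤ G := by
    intro a b h
    rw [hHadj] at h
    simpa using hE h
  have hHE : ∀ inst : Fintype H.edgeSet, @edgeFinset _ H inst = E := by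
    intro inst
    ext e
    induction e with
    | _ a b => simp [hHadj]
  have hsumH := H.sum_degrees_eq_twice_card_edges
  have hsumG := G.sum_degrees_eq_twice_card_edges
  rw [hHE] at hsumH
  have hH0 : ∀ x ∉ S, H.degree x = 0 := by
    intro x hx
    rw [← card_neighborFinset_eq_degree, Finset.card_eq_zero, Finset.eq_empty_iff_forall_notMem]
    intro y hy
    rw [mem_neighborFinset, hHadj] at hy
    exact hx (hES _ hy x (by simp))
  have hsplitH : ∑ x ∈ S, H.degree x = 2 * E.card := by
    rw [← hsumH]
    exact Finset.sum_subset (Finset.subset_univ _) (fun x _ hx => hH0 x hx)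
  have hsplitG : ∑ x ∈ S, G.degree x + ∑ x ∈ Sᶜ, G.degree x = 2 * G.edgeFinset.card := by
    rw [← hsumG]
    exact Finset.sum_add_sum_compl S _
  have hcompl : 2 * Sᶜ.card ≤ ∑ x ∈ Sᶜ, G.degree x := by
    have := Finset.card_nsmul_le_sum Sᶜ (fun x => G.degree x) 2 (fun x _ => hdeg x)
    simpa [mul_comm] using this
  have hSc : S.card + Sᶜ.card = Fintype.card V := Finset.card_add_card_compl S
  have hmono : ∀ x, H.degree x ≤ G.degree x := fun x => degree_le_of_le hle
  have hS1 : ∑ x ∈ S, H.degree x ≤ ∑ x ∈ S, G.degree x := Finset.sum_le_sum fun x _ => hmono x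
  refine ⟨by omega, fun heq => ?_⟩
  by_contra hne
  obtain ⟨s, hs⟩ := hS
  obtain ⟨t, ht⟩ : ∃ t, t ∉ S := by
    by_contra hh
    push Not at hh
    exact hne (Finset.eq_univ_of_forall hh)
  obtain ⟨W⟩ := hG.preconnected s t
  obtain ⟨⟨⟨y, x⟩, hyx⟩, -, hd1, hd2⟩ := W.exists_boundary_dart (S : Set V)
    (by simpa using hs) (by simpa using ht)
  simp only [Finset.mem_coe] at hd1 hd2
  change G.Adj y x at hyx
  have hlt : H.degree y < G.degree y := by
    rw [← card_neighborFinset_eq_degree, ← card_neighborFinset_eq_degree]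
    apply Finset.card_lt_card
    rw [Finset.ssubset_iff_of_subset]
    · refine ⟨x, by simpa using hyx, ?_⟩
      rw [mem_neighborFinset, hHadj]
      exact fun h => hd2 (hES _ h x (by simp))
    · intro a ha
      rw [mem_neighborFinset] at ha ⊢
      exact hle ha
  have : ∑ x ∈ S, H.degree x < ∑ x ∈ S, G.degree x :=
    Finset.sum_lt_sum (fun x _ => hmono x) ⟨y, hd1, hlt⟩
  omega

/-- **Theorem 3, second bullet.** For even `n ≥ 4`, every `n`-vertex `3`-chromatic `2`-connected
graph `G` satisfies `i_2(G) ≤ C(n,2) - (n+1)`, with equality iff `G` is (isomorphic to) a theta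
graph `θ_{a,b,c}` (with `a+b+c = n+1`) in which at least one of `a`, `b`, `c` is even. -/
theorem max_indep_pairs_even {V : Type*} [Fintype V] (n : ℕ) (hn : 4 ≤ n) (heven : Even n)
    (G : SimpleGraph V) (hcard : Fintype.card V = n)
    (hchrom : G.chromaticNumber = 3) (hconn : LConnected G 2) :
    numIndepSize G 2 ≤ Nat.choose n 2 - (n + 1) ∧
      (numIndepSize G 2 = Nat.choose n 2 - (n + 1) ↔
        ∃ a b c : ℕ, a + b + c = n + 1 ∧ (Even a ∨ Even b ∨ Even c) ∧ IsTheta G a b c) := by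
  classical
  subst hcard
  have hI := aux_indep G
  have hdeg := aux_min_degree G hn hconn
  have hch : Fintype.card V + 1 ≤ (Fintype.card V).choose 2 := by
    obtain ⟨k, hk⟩ : ∃ k, Fintype.card V = k + 4 := ⟨Fintype.card V - 4, by omega⟩
    rw [hk, Nat.choose_two_right, Nat.le_div_iff_mul_le (by norm_num)]
    simp only [Nat.add_succ_sub_one]
    nlinarith
  obtain ⟨v, w, hvw, p, q, r, hp, hq, hr, hpq, hpr, hqr, epq, epr, eqr, hodd⟩ :=
    aux_hasTheta G heven hchrom hconn
  have hEc := aux_edge_card p q r hp hq hr epq epr eqr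
  have hSc := aux_supp_card hvw p q r
  set S := p.support.toFinset ∪ q.support.toFinset ∪ r.support.toFinset with hSdef
  set E := p.edges.toFinset ∪ q.edges.toFinset ∪ r.edges.toFinset with hEdef
  have hEsub : E ⊆ G.edgeFinset := by
    intro e he
    simp only [hEdef, Finset.mem_union, List.mem_toFinset] at he
    rw [mem_edgeFinset]
    rcases he with (he | he) | he
    · exact p.edges_subset_edgeSet he
    · exact q.edges_subset_edgeSet he
    · exact r.edges_subset_edgeSet he
  have hES : ∀ e ∈ E, ∀ x ∈ e, x ∈ S := by
    intro e he x hx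
    simp only [hEdef, Finset.mem_union, List.mem_toFinset] at he
    simp only [hSdef, Finset.mem_union, List.mem_toFinset]
    obtain ⟨y, rfl⟩ := hx
    rcases he with (he | he) | he
    · exact Or.inl (Or.inl (p.fst_mem_support_of_mem_edges he))
    · exact Or.inl (Or.inr (q.fst_mem_support_of_mem_edges he))
    · exact Or.inr (r.fst_mem_support_of_mem_edges he)
  obtain ⟨hge, heq⟩ := aux_count G (aux_connected G hconn) hdeg S ⟨v, by simp [hSdef]⟩ E hEsub hES
    (by omega)
  refine ⟨by omega, fun h => ?_, ?_⟩
  · have he : G.edgeFinset.card = Fintype.card V + 1 := by omega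
    have hSu := heq he
    have hScard : S.card = Fintype.card V := by rw [hSu, Finset.card_univ]
    have hle := Finset.card_le_card hEsub
    have hEG : E = G.edgeFinset := Finset.eq_of_subset_of_card_le hEsub (by omega)
    refine ⟨p.length, q.length, r.length, by omega, ?_, v, w, hvw, p, q, r, hp, hq, hr, rfl, rfl,
      rfl, hpq, hpr, hqr, epq, epr, eqr, ?_, ?_⟩
    · rw [Nat.odd_add] at hodd
      by_cases h' : Even r.length
      · exact Or.inr (Or.inr h')
      · refine Or.inr (Or.inl ?_)
        rw [← Nat.not_odd_iff_even]
        exact fun h2 => h' (hodd.1 h2)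
    · intro x
      have : x ∈ S := by rw [hSu]; simp
      simpa [hSdef, or_assoc] using this
    · intro e he
      rw [← mem_edgeFinset, ← hEG] at he
      simpa [hEdef, or_assoc] using he
  · rintro ⟨a, b, c, habc, -, v', w', -, p', q', r', hp', hq', hr', rfl, rfl, rfl, -, -, -,
      e1, e2, e3, -, hcov⟩
    have hc := aux_edge_card p' q' r' hp' hq' hr' e1 e2 e3
    have : G.edgeFinset ⊆ p'.edges.toFinset ∪ q'.edges.toFinset ∪ r'.edges.toFinset := by
      intro e he
      have := hcov e (mem_edgeFinset.1 he)
      simpa [or_assoc] using this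
    have := Finset.card_le_card this
    omega
end

section
/- For all integers n, k, ℓ with k − 1 > ℓ > 1 and ℓ ≤ n − k, there exists an n-vertex k-chromatic ℓ-connected simple graph with exactly C(k,2) + ⌈(n−k+1)·ℓ/2⌉ edges. -/
open SimpleGraph

/-- Graph with the vertices of `s` isolated. -/
def delG {V : Type*} (G : SimpleGraph V) (s : Finset V) : SimpleGraph V where
  Adj a b := G.Adj a b ∧ a ∉ s ∧ b ∉ s
  symm := ⟨fun _ _ h => ⟨h.1.symm, h.2.2, h.2.1⟩⟩
  loopless := ⟨fun a h => G.loopless.irrefl a h.1⟩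

/-- survivors are mutually reachable -/
def CA {V : Type*} (G : SimpleGraph V) (s : Finset V) : Prop :=
  ∀ u v, u ∉ s → v ∉ s → (delG G s).Reachable u v

lemma induce_reach {V : Type*} (G : SimpleGraph V) (s : Finset V) (u v : V)
    (hu : u ∉ s) (h : (delG G s).Reachable u v) :
    ∃ hv : v ∉ s, (G.induce ((↑s : Set V)ᶜ)).Reachable ⟨u, by simpa using hu⟩ ⟨v, by simpa using hv⟩ := by
  obtain ⟨w⟩ := h
  induction w with
  | nil => exact ⟨hu, Reachable.refl _⟩
  | cons h p ih =>
    obtain ⟨hv, hr⟩ := ih h.2.2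
    refine ⟨hv, Reachable.trans (Adj.reachable ?_) hr⟩
    exact h.1

lemma LConnected_of {V : Type*} [Fintype V] (G : SimpleGraph V) (l : ℕ)
    (h1 : l < Fintype.card V) (h2 : ∀ s : Finset V, s.card < l → CA G s) : LConnected G l := by
  refine ⟨h1, fun s hs => ?_⟩
  have : ∃ x, x ∉ s := by
    by_contra! hc
    have : s = Finset.univ := by ext; simp [hc]
    subst this
    simp at hs
    omega
  obtain ⟨x, hx⟩ := this
  haveI : Nonempty ((↑s : Set V)ᶜ : Set V) := ⟨⟨x, by simpa using hx⟩⟩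
  refine Connected.mk ?_
  rintro ⟨u, hu⟩ ⟨v, hv⟩
  have hu' : u ∉ s := by simpa using hu
  have hv' : v ∉ s := by simpa using hv
  exact (induce_reach G s u v hu' (h2 s hs u v hu' hv')).2

lemma LConnected_iso {V W : Type*} [Fintype V] [Fintype W] (G : SimpleGraph V) (H : SimpleGraph W)
    (e : G ≃g H) (l : ℕ) (h1 : l < Fintype.card V) (h : ∀ s : Finset V, s.card < l → CA G s) :
    LConnected H l := by
  classical
  apply LConnected_of
  · rwa [← Fintype.card_congr e.toEquiv]
  intro s hs u v hu hv
  have := h (s.map e.symm.toEquiv.toEmbedding) (by simpa using hs) (e.symm u) (e.symm v)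
    (by
      rw [Finset.mem_map]; rintro ⟨a, ha, hb⟩
      exact hu (e.symm.injective hb ▸ ha)) (by
      rw [Finset.mem_map]; rintro ⟨a, ha, hb⟩
      exact hv (e.symm.injective hb ▸ ha))
  let φ : delG G (s.map e.symm.toEquiv.toEmbedding) →g delG H s :=
    { toFun := e
      map_rel' := by
        intro a b hab
        refine ⟨e.map_adj_iff.2 hab.1, ?_, ?_⟩
        · intro hc; apply hab.2.1; simp only [Finset.mem_map]; exact ⟨e a, hc, by simp⟩
        · intro hc; apply hab.2.2; simp only [Finset.mem_map]; exact ⟨e b, hc, by simp⟩ }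
  have h3 := this.map φ
  have e1 : φ (e.symm u) = u := e.apply_symm_apply u
  have e2 : φ (e.symm v) = v := e.apply_symm_apply v
  rwa [e1, e2] at h3

lemma min_deg {V : Type*} [Fintype V] [DecidableEq V] (H : SimpleGraph V) [DecidableRel H.Adj]
    (l : ℕ) (h1 : l < Fintype.card V)
    (h : ∀ s : Finset V, s.card < l → CA H s) (u : V) : l ≤ H.degree u := by
  by_contra! hlt
  have hu : u ∉ H.neighborFinset u := by simp
  have : ∃ v, v ∉ insert u (H.neighborFinset u) := by
    by_contra! hc
    have h2 : insert u (H.neighborFinset u) = Finset.univ := by ext x; simpa using hc x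
    have h3 := congrArg Finset.card h2
    rw [Finset.card_insert_of_notMem hu, Finset.card_univ, card_neighborFinset_eq_degree] at h3
    omega
  obtain ⟨v, hv⟩ := this
  rw [Finset.mem_insert, not_or] at hv
  obtain ⟨w⟩ := h (H.neighborFinset u) (by simpa using hlt) u v hu hv.2
  cases w with
  | nil => exact hv.1 rfl
  | cons h p => exact h.2.2 (by simpa using h.1)

section harary

variable {N : ℕ} (H : SimpleGraph (ZMod N)) (s : Finset (ZMod N)) (r : ℕ)

lemma linear_reach (hadj : ∀ (u : ℤ) (j : ℕ), 1 ≤ j → j ≤ r → H.Adj (u : ZMod N) ((u + j : ℤ) : ZMod N))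
    (hr : 1 ≤ r) (d : ℕ) : ∀ x y : ℤ, x ≤ y → y - x ≤ d → (x : ZMod N) ∉ s → (y : ZMod N) ∉ s →
    (∀ p : ℤ, x < p → p + r ≤ y → ∃ i : ℤ, p ≤ i ∧ i < p + r ∧ (i : ZMod N) ∉ s) →
    (delG H s).Reachable (x : ZMod N) (y : ZMod N) := by
  induction d with
  | zero =>
    intro x y h1 h2 _ _ _
    have : x = y := by push_cast at h2; omega
    rw [this]
  | succ d ih =>
    intro x y h1 h2 hx hy hb
    by_cases hxy : x = y
    · rw [hxy]
    by_cases hle : y - x ≤ r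
    · apply Adj.reachable
      refine ⟨?_, hx, hy⟩
      have := hadj x (y - x).toNat (by omega) (by omega)
      have e : x + ((y - x).toNat : ℤ) = y := by omega
      rwa [e] at this
    · obtain ⟨i, hi1, hi2, hi3⟩ := hb (x + 1) (by omega) (by omega)
      have hA : (delG H s).Adj (x : ZMod N) (i : ZMod N) := by
        refine ⟨?_, hx, hi3⟩
        have := hadj x (i - x).toNat (by omega) (by omega)
        have e : x + ((i - x).toNat : ℤ) = i := by omega
        rwa [e] at this
      refine hA.reachable.trans (ih i y (by omega) (by push_cast at h2; omega) hi3 hy ?_)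
      intro p hp1 hp2
      exact hb p (by omega) hp2

lemma cast_inj_window (hN : 0 < N) (x a b : ℤ) (ha : x ≤ a) (ha' : a < x + N) (hb : x ≤ b)
    (hb' : b < x + N) (h : (a : ZMod N) = b) : a = b := by
  rw [ZMod.intCast_eq_intCast_iff_dvd_sub] at h
  have := Int.eq_zero_of_abs_lt_dvd h (by rw [abs_lt]; constructor <;> omega)
  omega

lemma harary_conn (hN : 0 < N)
    (hadj : ∀ (u : ℤ) (j : ℕ), 1 ≤ j → j ≤ r → H.Adj (u : ZMod N) ((u + j : ℤ) : ZMod N))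
    (hr : 1 ≤ r)
    (hs : s.card < 2 * r ∨ (s.card ≤ 2 * r ∧ ∀ u : ℤ, ∃ t : ℤ, (t = N / 2 ∨ t = N - N / 2) ∧
      H.Adj (u : ZMod N) ((u + t : ℤ) : ZMod N))) : CA H s := by
  classical
  have key : ∀ x y : ℤ, x < y → y < x + N → (x : ZMod N) ∉ s → (y : ZMod N) ∉ s →
      (delG H s).Reachable (x : ZMod N) (y : ZMod N) := by
    intro x y hxy hyx hx hy
    have hxN : ((x + N : ℤ) : ZMod N) = x := by push_cast; simp
    by_contra hcon
    have L := linear_reach H s r hadj hr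
    have h1 : ∃ p : ℤ, x < p ∧ p + r ≤ y ∧ ∀ i : ℤ, p ≤ i → i < p + r → (i : ZMod N) ∈ s := by
      by_contra! hc
      exact hcon (L (y - x).toNat x y (by omega) (by omega) hx hy hc)
    have h2 : ∃ p : ℤ, y < p ∧ p + r ≤ x + N ∧ ∀ i : ℤ, p ≤ i → i < p + r → (i : ZMod N) ∈ s := by
      by_contra! hc
      have := (L (x + N - y).toNat y (x + N) (by omega) (by omega) hy (by rwa [hxN]) hc)
      rw [hxN] at this
      exact hcon this.symm
    obtain ⟨p, hp1, hp2, hp⟩ := h1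
    obtain ⟨q, hq1, hq2, hq⟩ := h2
    set B : Finset ℤ := Finset.Ico p (p + r) ∪ Finset.Ico q (q + r) with hB
    have hBm : ∀ i, i ∈ B ↔ (p ≤ i ∧ i < p + r) ∨ (q ≤ i ∧ i < q + r) := by
      intro i; simp [hB]
    have hBc : B.card = 2 * r := by
      rw [hB, Finset.card_union_of_disjoint]
      · simp; omega
      · rw [Finset.disjoint_left]; intro i; simp; omega
    have hinj : Set.InjOn (fun i : ℤ => (i : ZMod N)) B := by
      intro a ha b hb hab
      have ha := (hBm a).1 ha
      have hb := (hBm b).1 hb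
      exact cast_inj_window hN x a b (by omega) (by omega) (by omega) (by omega) hab
    have hsub : B.image (fun i : ℤ => (i : ZMod N)) ⊆ s := by
      intro z hz
      obtain ⟨i, hi, rfl⟩ := Finset.mem_image.1 hz
      rcases (hBm i).1 hi with h | h
      · exact hp i h.1 h.2
      · exact hq i h.1 h.2
    have hic : (B.image (fun i : ℤ => (i : ZMod N))).card = 2 * r := by
      rw [Finset.card_image_of_injOn hinj, hBc]
    have hle := Finset.card_le_card hsub
    rcases hs with hs | ⟨hs, hdiam⟩
    · omega
    have hseq := Finset.eq_of_subset_of_card_le hsub (by omega)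
    have hout : ∀ z : ℤ, x ≤ z → z < x + N → z ∉ B → (z : ZMod N) ∉ s := by
      intro z h1 h2 h3 h4
      rw [← hseq] at h4
      obtain ⟨i, hi, hiz⟩ := Finset.mem_image.1 h4
      have hi' := (hBm i).1 hi
      have := cast_inj_window hN x i z (by omega) (by omega) h1 h2 hiz
      exact h3 (this ▸ hi)
    have hoB : ∀ z : ℤ, p + r ≤ z → z < q → (z : ZMod N) ∉ s := by
      intro z h1 h2
      exact hout z (by omega) (by omega) (by rw [hBm]; omega)
    have hoA : ∀ z : ℤ, q + r ≤ z → z < p + N → (z : ZMod N) ∉ s := by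
      intro z h1 h2
      by_cases hz : z < x + N
      · exact hout z (by omega) (by omega) (by rw [hBm]; omega)
      · have := hout (z - N) (by omega) (by omega) (by rw [hBm]; omega)
        have e : ((z - N : ℤ) : ZMod N) = z := by push_cast; simp
        rwa [e] at this
    have hrB : ∀ z w : ℤ, p + r ≤ z → z ≤ w → w < q →
        (delG H s).Reachable (z : ZMod N) (w : ZMod N) := by
      intro z w h1 h2 h3
      refine L (w - z).toNat z w h2 (by omega) (hoB z h1 (by omega)) (hoB w (by omega) h3) ?_
      intro t ht1 ht2
      exact ⟨t, le_refl _, by omega, hoB t (by omega) (by omega)⟩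
    have hrA : ∀ z w : ℤ, q + r ≤ z → z ≤ w → w < p + N →
        (delG H s).Reachable (z : ZMod N) (w : ZMod N) := by
      intro z w h1 h2 h3
      refine L (w - z).toNat z w h2 (by omega) (hoA z h1 (by omega)) (hoA w (by omega) h3) ?_
      intro t ht1 ht2
      exact ⟨t, le_refl _, by omega, hoA t (by omega) (by omega)⟩
    by_cases hc : (N : ℤ) ≤ 2 * (q - p)
    · obtain ⟨t, ht, hA⟩ := hdiam x
      have h1 : p + r ≤ x + t := by omega
      have h2 : x + t < q := by omega
      have hA' : (delG H s).Adj (x : ZMod N) ((x + t : ℤ) : ZMod N) := ⟨hA, hx, hoB _ h1 h2⟩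
      rcases le_total (x + t) y with h | h
      · exact hcon (hA'.reachable.trans (hrB _ _ h1 h hq1))
      · exact hcon (hA'.reachable.trans (hrB _ _ hp2 h h2).symm)
    · obtain ⟨t, ht, hA⟩ := hdiam y
      have h1 : q + r ≤ y + t := by omega
      have h2 : y + t < p + N := by omega
      have hA' : (delG H s).Adj (y : ZMod N) ((y + t : ℤ) : ZMod N) := ⟨hA, hy, hoA _ h1 h2⟩
      rcases le_total (y + t) (x + N) with h | h
      · have := hrA _ _ h1 h (by omega)
        rw [hxN] at this
        exact hcon (hA'.reachable.trans this).symm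
      · have := hrA _ _ hq2 h h2
        rw [hxN] at this
        exact hcon (hA'.reachable.trans this.symm).symm
  haveI : NeZero N := ⟨hN.ne'⟩
  intro u v hu hv
  have eu : (((u.val : ℕ) : ℤ) : ZMod N) = u := by simp
  have ev : (((v.val : ℕ) : ℤ) : ZMod N) = v := by simp
  have lu := ZMod.val_lt u
  have lv := ZMod.val_lt v
  rw [← eu] at hu ⊢
  rw [← ev] at hv ⊢
  rcases lt_trichotomy u.val v.val with h | h | h
  · exact key _ _ (by omega) (by omega) hu hv
  · rw [h]
  · exact (key _ _ (by omega) (by omega) hv hu).symm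

end harary

/-- circulant edges -/
def circE (N r : ℕ) [NeZero N] : Finset (Sym2 (ZMod N)) :=
  (Finset.univ ×ˢ Finset.Icc 1 r).image (fun x : ZMod N × ℕ => s(x.1, x.1 + (x.2 : ZMod N)))

/-- diameters -/
def diamE (N : ℕ) : Finset (Sym2 (ZMod N)) :=
  (Finset.range ((N + 1) / 2)).image (fun i : ℕ => s((i : ZMod N), ((i + N / 2 : ℕ) : ZMod N)))

lemma circE_card (N r : ℕ) [NeZero N] : (circE N r).card ≤ N * r := by
  refine Finset.card_image_le.trans ?_
  simp [ZMod.card]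

lemma diamE_card (N : ℕ) : (diamE N).card ≤ (N + 1) / 2 := by
  refine Finset.card_image_le.trans ?_
  simp

lemma shift_ne (N : ℕ) (u j : ℤ) (h1 : 1 ≤ j) (h2 : j < N) :
    (u : ZMod N) ≠ ((u + j : ℤ) : ZMod N) := by
  intro h
  have := cast_inj_window (by omega) u u (u + j) (by omega) (by omega) (by omega) (by omega) h
  omega

lemma exists_harary (m l : ℕ) (hl : 1 < l) (hm : l ≤ m) :
    ∃ H : SimpleGraph (ZMod (m + 1)), (∀ s, s.card < l → CA H s) ∧
      Nat.card H.edgeSet ≤ ((m + 1) * l + 1) / 2 := by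
  classical
  set N := m + 1 with hN
  have adjC : ∀ (r : ℕ) (E : Finset (Sym2 (ZMod N))), circE N r ⊆ E → r < N →
    ∀ (u : ℤ) (j : ℕ), 1 ≤ j → j ≤ r →
      (fromEdgeSet (E : Set (Sym2 (ZMod N)))).Adj (u : ZMod N) ((u + j : ℤ) : ZMod N) := by
    intro r E hE hr u j h1 h2
    rw [fromEdgeSet_adj]
    refine ⟨?_, shift_ne N u j (by omega) (by omega)⟩
    apply Finset.mem_coe.2
    apply hE
    refine Finset.mem_image.2 ⟨((u : ZMod N), j), by simp; omega, ?_⟩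
    push_cast; rfl
  have cardE : ∀ E : Finset (Sym2 (ZMod N)),
      Nat.card (fromEdgeSet (E : Set (Sym2 (ZMod N)))).edgeSet ≤ E.card := by
    intro E
    rw [edgeSet_fromEdgeSet]
    rw [Nat.card_coe_set_eq, ← Set.ncard_coe_finset]
    exact Set.ncard_le_ncard Set.sdiff_subset (Finset.finite_toSet E)
  obtain ⟨r, hr | hr⟩ := Nat.even_or_odd' l
  · refine ⟨fromEdgeSet (circE N r : Set (Sym2 (ZMod N))), ?_, ?_⟩
    · intro s hs
      exact harary_conn _ s r (by omega) (adjC r _ (le_refl _) (by omega)) (by omega)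
        (Or.inl (by omega))
    · refine (cardE _).trans ((circE_card N r).trans ?_)
      have : N * l = 2 * (N * r) := by rw [hr]; ring
      omega
  · refine ⟨fromEdgeSet ((circE N r ∪ diamE N : Finset _) : Set (Sym2 (ZMod N))), ?_, ?_⟩
    · intro s hs
      refine harary_conn _ s r (by omega) (adjC r _ Finset.subset_union_left (by omega)) (by omega)
        (Or.inr ⟨by omega, ?_⟩)
      intro u
      have hv := ZMod.val_lt (u : ZMod N)
      set v := (u : ZMod N).val with hvd
      have huv : ((v : ℕ) : ZMod N) = (u : ZMod N) := by simp [hvd]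
      by_cases hc : v < (N + 1) / 2
      · refine ⟨((N / 2 : ℕ) : ℤ), Or.inl (by simp), ?_⟩
        rw [fromEdgeSet_adj]
        refine ⟨?_, shift_ne N u _ (by omega) (by omega)⟩
        apply Finset.mem_coe.2
        apply Finset.mem_union_right
        refine Finset.mem_image.2 ⟨v, by simpa using hc, ?_⟩
        rw [Nat.cast_add, huv, Int.cast_add, Int.cast_natCast]
      · refine ⟨((N - N / 2 : ℕ) : ℤ), Or.inr (by omega), ?_⟩
        rw [fromEdgeSet_adj]
        refine ⟨?_, shift_ne N u _ (by omega) (by omega)⟩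
        apply Finset.mem_coe.2
        apply Finset.mem_union_right
        refine Finset.mem_image.2 ⟨v - N / 2, by simp; omega, ?_⟩
        rw [Sym2.eq_swap]
        have e1 : v - N / 2 + N / 2 = v := by omega
        have e2 : ((v - N / 2 : ℕ) : ZMod N) = ((u + (N - N / 2 : ℕ) : ℤ) : ZMod N) := by
          have : v - N / 2 + N = v + (N - N / 2) := by omega
          have h3 := congrArg (Nat.cast : ℕ → ZMod N) this
          rw [Nat.cast_add (v - N / 2) N, Nat.cast_add v, huv, ZMod.natCast_self, add_zero] at h3
          rw [h3, Int.cast_add, Int.cast_natCast]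
        rw [e1, e2, huv]
    · refine (cardE _).trans ((Finset.card_union_le _ _).trans
        ((add_le_add (circE_card N r) (diamE_card N)).trans ?_))
      have : N * l = 2 * (N * r) + N := by rw [hr]; ring
      omega

section blowup

variable {m k : ℕ} (H : SimpleGraph (Fin (m + 1))) (f : Fin m → Fin k)

/-- replace vertex `0` of `H` by a `k`-clique -/
def blow : SimpleGraph (Fin k ⊕ Fin m) where
  Adj
    | .inl a, .inl b => a ≠ b
    | .inl a, .inr w => H.Adj 0 w.succ ∧ f w = a
    | .inr w, .inl a => H.Adj 0 w.succ ∧ f w = a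
    | .inr w, .inr w' => H.Adj w.succ w'.succ
  symm := ⟨by
    rintro (a | a) (b | b) h
    · exact Ne.symm h
    · exact h
    · exact h
    · exact H.symm.symm _ _ h⟩
  loopless := ⟨by
    rintro (a | a) h
    · exact h rfl
    · exact H.loopless.irrefl _ h⟩

lemma two_card {V : Type*} [Fintype V] [DecidableEq V] (G : SimpleGraph V) [DecidableRel G.Adj] :
    2 * Nat.card G.edgeSet = ∑ u, ∑ v, if G.Adj u v then 1 else 0 := by
  have := G.sum_degrees_eq_twice_card_edges
  rw [Nat.card_eq_fintype_card, ← edgeFinset_card, ← this]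
  refine Finset.sum_congr rfl fun u _ => ?_
  rw [Finset.sum_boole, ← card_neighborFinset_eq_degree, neighborFinset_eq_filter]
  simp

lemma blow_card : Nat.card (blow H f).edgeSet = Nat.choose k 2 + Nat.card H.edgeSet := by
  classical
  have h1 := two_card (blow H f)
  have h2 := two_card H
  have h3 := two_card (⊤ : SimpleGraph (Fin k))
  have h4 : Nat.card (⊤ : SimpleGraph (Fin k)).edgeSet = k.choose 2 := by
    rw [Nat.card_eq_fintype_card, ← edgeFinset_card, card_edgeFinset_top_eq_card_choose_two,
      Fintype.card_fin]
  rw [h4] at h3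
  simp only [Fintype.sum_sum_type] at h1
  simp only [Fin.sum_univ_succ (n := m), H.irrefl, if_false, zero_add] at h2
  rw [Finset.sum_add_distrib] at h1 h2
  rw [Finset.sum_add_distrib] at h1
  have e1 : ∑ a : Fin k, ∑ b : Fin k, (if (blow H f).Adj (.inl a) (.inl b) then 1 else 0) =
      ∑ a : Fin k, ∑ b : Fin k, (if (⊤ : SimpleGraph (Fin k)).Adj a b then 1 else 0) := Finset.sum_congr rfl fun a _ => Finset.sum_congr rfl fun b _ =>
      if_congr Iff.rfl rfl rfl
  have e4 : ∑ a : Fin m, ∑ b : Fin m, (if (blow H f).Adj (.inr a) (.inr b) then 1 else 0) =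
      ∑ a : Fin m, ∑ b : Fin m, (if H.Adj a.succ b.succ then 1 else 0) := Finset.sum_congr rfl fun a _ => Finset.sum_congr rfl fun b _ =>
      if_congr Iff.rfl rfl rfl
  have e3 : ∑ w : Fin m, ∑ a : Fin k, (if (blow H f).Adj (.inr w) (.inl a) then 1 else 0) =
      ∑ w : Fin m, (if H.Adj 0 w.succ then 1 else 0) := by
    refine Finset.sum_congr rfl fun w _ => ?_
    have : ∀ a, (blow H f).Adj (.inr w) (.inl a) ↔ H.Adj 0 w.succ ∧ f w = a := fun _ => Iff.rfl
    simp only [this]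
    by_cases hw : H.Adj 0 w.succ <;> simp [hw]
  have e2 : ∑ a : Fin k, ∑ w : Fin m, (if (blow H f).Adj (.inl a) (.inr w) then 1 else 0) =
      ∑ w : Fin m, (if H.Adj 0 w.succ then 1 else 0) := by
    rw [Finset.sum_comm, ← e3]
    rfl
  have e5 : ∑ w : Fin m, (if H.Adj w.succ 0 then 1 else 0) =
      ∑ w : Fin m, (if H.Adj 0 w.succ then 1 else 0) := by
    simp only [H.adj_comm]
  rw [e1, e2, e3, e4] at h1
  rw [e5] at h2
  omega

/-- projection -/
def proj : Fin k ⊕ Fin m → Fin (m + 1) := Sum.elim (fun _ => 0) Fin.succ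

lemma blow_conn (l : ℕ) (hm : l ≤ m)
    (hc : ∀ s : Finset (Fin (m + 1)), s.card < l → CA H s)
    (hf : ∀ w w', H.Adj 0 w.succ → H.Adj 0 w'.succ → f w = f w' → w = w')
    (S : Finset (Fin k ⊕ Fin m)) (hS : S.card < l) : CA (blow H f) S := by
  classical
  set T : Finset (Fin (m + 1)) := S.image proj with hT
  have hTc : T.card < l := Finset.card_image_le.trans_lt hS
  have clique : ∀ a b : Fin k, .inl a ∉ S → .inl b ∉ S →
      (delG (blow H f) S).Reachable (.inl a) (.inl b) := by
    intro a b ha hb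
    by_cases h : a = b
    · rw [h]
    · exact Adj.reachable ⟨h, ha, hb⟩
  by_cases hA : ∃ a : Fin k, Sum.inl a ∈ S
  · -- Case B: zero is in T
    obtain ⟨a0, ha0⟩ := hA
    have h0 : (0 : Fin (m + 1)) ∈ T := Finset.mem_image.2 ⟨_, ha0, rfl⟩
    have hTs : ∀ w : Fin m, w.succ ∈ T ↔ Sum.inr w ∈ S := by
      intro w
      rw [hT, Finset.mem_image]
      constructor
      · rintro ⟨(a | b), h, e⟩
        · exact absurd e (Fin.succ_ne_zero w).symm
        · have : b = w := Fin.succ_injective _ e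
          rwa [← this]
      · intro h; exact ⟨_, h, rfl⟩
    have walk : ∀ u v : Fin (m + 1), (delG H T).Reachable u v → ∀ w w' : Fin m, u = w.succ →
        v = w'.succ → (delG (blow H f) S).Reachable (.inr w) (.inr w') := by
      rintro u v ⟨p⟩
      induction p with
      | nil =>
        intro w w' h1 h2
        rw [Fin.succ_injective _ (h1.symm.trans h2)]
      | @cons u x v h p ih =>
        intro w w' h1 h2
        have hx : x ≠ 0 := fun hx => h.2.2 (hx ▸ h0)
        obtain ⟨z, rfl⟩ := Fin.exists_succ_eq.2 hx
        subst h1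
        refine Reachable.trans (v := Sum.inr z) (Adj.reachable ⟨h.1, ?_, ?_⟩) (ih z w' rfl h2)
        · rw [← hTs]; exact h.2.1
        · rw [← hTs]; exact h.2.2
    have out : ∀ w w' : Fin m, .inr w ∉ S → .inr w' ∉ S →
        (delG (blow H f) S).Reachable (.inr w) (.inr w') := by
      intro w w' h h'
      exact walk _ _ (hc T hTc w.succ w'.succ (by rwa [hTs]) (by rwa [hTs])) w w' rfl rfl
    have ex : ∃ w : Fin m, H.Adj 0 w.succ ∧ .inr w ∉ S ∧ .inl (f w) ∉ S := by
      by_contra! hcon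
      have hd := min_deg H l (by simp; omega) hc 0
      set Nb : Finset (Fin m) := Finset.univ.filter (fun w => H.Adj 0 w.succ) with hNb
      have hNc : H.degree 0 = Nb.card := by
        rw [← card_neighborFinset_eq_degree, neighborFinset_eq_filter]
        have : (Finset.univ.filter (fun w => H.Adj 0 w)) = Nb.map (Fin.succEmb m) := by
          ext x
          refine Fin.cases ?_ (fun i => ?_) x
          · simp
          · simp [hNb]
        rw [this, Finset.card_map]
      have := Finset.card_le_card_of_injOn (s := Nb) (t := S)
        (fun w => if Sum.inr w ∈ S then Sum.inr w else Sum.inl (f w)) (by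
          intro w hw
          have hw : H.Adj 0 w.succ := by simpa [hNb] using hw
          by_cases h : Sum.inr w ∈ S
          · simp [h]
          · simpa [h] using hcon w hw h) (by
          intro w hw w' hw' e
          have hw : H.Adj 0 w.succ := by simpa [hNb] using hw
          have hw' : H.Adj 0 w'.succ := by simpa [hNb] using hw'
          by_cases h : Sum.inr w ∈ S <;> by_cases h' : Sum.inr w' ∈ S <;> simp [h, h'] at e
          · exact e
          · exact hf w w' hw hw' e)
      omega
    obtain ⟨w0, hw1, hw2, hw3⟩ := ex
    have hE : (delG (blow H f) S).Reachable (.inl (f w0)) (.inr w0) :=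
      Adj.reachable ⟨⟨hw1, rfl⟩, hw3, hw2⟩
    have all : ∀ x, x ∉ S → (delG (blow H f) S).Reachable x (.inr w0) := by
      rintro (a | w) hx
      · exact (clique _ _ hx hw3).trans hE
      · exact out _ _ hx hw2
    intro u v hu hv
    exact (all u hu).trans (all v hv).symm
  · push Not at hA
    have hTs : ∀ x : Fin k ⊕ Fin m, proj x ∈ T → x ∈ S := by
      intro x
      rw [hT, Finset.mem_image]
      rintro ⟨(a | b), h, e⟩
      · exact absurd h (hA a)
      · rcases x with x | x
        · exact absurd e (Fin.succ_ne_zero b)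
        · have : b = x := Fin.succ_injective _ e
          rwa [← this]
    have same : ∀ x x' : Fin k ⊕ Fin m, proj x = proj x' →
        (delG (blow H f) S).Reachable x x' := by
      rintro (a | w) (a' | w') h
      · exact clique _ _ (hA _) (hA _)
      · exact absurd h (Fin.succ_ne_zero _).symm
      · exact absurd h (Fin.succ_ne_zero _)
      · rw [Fin.succ_injective _ h]
    have step : ∀ x x' : Fin k ⊕ Fin m, H.Adj (proj x) (proj x') → x ∉ S → x' ∉ S →
        (delG (blow H f) S).Reachable x x' := by
      rintro (a | w) (a' | w') h hx hx'
      · exact clique _ _ (hA _) (hA _)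
      · exact (clique a (f w') (hA _) (hA _)).trans (Adj.reachable ⟨⟨h, rfl⟩, hA _, hx'⟩)
      · exact ((clique a' (f w) (hA _) (hA _)).trans
          (Adj.reachable (v := Sum.inr w) ⟨⟨h.symm, rfl⟩, hA _, hx⟩)).symm
      · exact Adj.reachable ⟨h, hx, hx'⟩
    have walk : ∀ u v : Fin (m + 1), (delG H T).Reachable u v → ∀ x x' : Fin k ⊕ Fin m,
        u = proj x → v = proj x' → x ∉ S → x' ∉ S → (delG (blow H f) S).Reachable x x' := by
      rintro u v ⟨p⟩
      induction p with
      | nil =>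
        intro x x' h1 h2 _ _
        exact same _ _ (h1.symm.trans h2)
      | @cons u y v h p ih =>
        intro x x' h1 h2 hx hx'
        subst h1
        by_cases hy : y = 0
        · have hw : ∃ w, x = .inr w := by
            rcases x with a | w
            · exact absurd h.1 (by rw [hy]; exact H.loopless.irrefl 0)
            · exact ⟨w, rfl⟩
          obtain ⟨w, rfl⟩ := hw
          exact (step (.inr w) (.inl (f w)) (by have := h.1; rwa [hy] at this) hx (hA _)).trans
            (ih (.inl (f w)) x' hy h2 (hA _) hx')
        · obtain ⟨z, rfl⟩ := Fin.exists_succ_eq.2 hy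
          have hz : Sum.inr z ∉ S := fun hz => h.2.2 (Finset.mem_image.2 ⟨_, hz, rfl⟩)
          exact (step x (.inr z) h.1 hx hz).trans (ih (.inr z) x' rfl h2 hz hx')
    intro u v hu hv
    exact walk _ _ (hc T hTc (proj u) (proj v) (fun h => hu (hTs _ h)) (fun h => hv (hTs _ h)))
      u v rfl rfl hu hv

lemma blow_color [DecidableRel H.Adj] (hd : ∀ u, H.degree u < k) : (blow H f).Colorable k := by
  classical
  have main : ∀ j : ℕ, j ≤ m → ∃ c : Fin m → Fin k, ∀ w : Fin m, w.val < j →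
      (H.Adj 0 w.succ → f w ≠ c w) ∧
      ∀ w' : Fin m, w'.val < j → H.Adj w.succ w'.succ → c w ≠ c w' := by
    intro j
    induction j with
    | zero => intro _; exact ⟨f, fun w hw => absurd hw (by omega)⟩
    | succ j ih =>
      intro hj
      obtain ⟨c, hc⟩ := ih (by omega)
      let z : Fin m := ⟨j, hj⟩
      let g : Fin (m + 1) → Fin k := Fin.cons (f z) c
      have : ∃ a : Fin k, a ∉ (H.neighborFinset z.succ).image g := by
        by_contra! hcon
        have h1 : (H.neighborFinset z.succ).image g = Finset.univ := by ext a; simpa using hcon a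
        have h2 : ((H.neighborFinset z.succ).image g).card ≤ _ := Finset.card_image_le
        rw [h1, card_neighborFinset_eq_degree, Finset.card_univ, Fintype.card_fin] at h2
        have := hd z.succ
        omega
      obtain ⟨a, ha⟩ := this
      have ha' : ∀ x, H.Adj z.succ x → g x ≠ a := by
        intro x hx hg
        exact ha (Finset.mem_image.2 ⟨x, by simpa using hx, hg⟩)
      refine ⟨Function.update c z a, ?_⟩
      have hz : ∀ w : Fin m, w.val < j + 1 → w ≠ z → w.val < j := by
        intro w h1 h2
        have : w.val ≠ j := fun h => h2 (Fin.ext h)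
        omega
      intro w hw
      by_cases hwz : w = z
      · subst hwz
        rw [Function.update_self]
        refine ⟨fun h => ha' 0 h.symm, fun w' hw' hadj => ?_⟩
        by_cases hw'z : w' = z
        · rw [hw'z] at hadj; exact absurd hadj (H.loopless.irrefl _)
        · rw [Function.update_of_ne hw'z]
          exact (ha' w'.succ hadj).symm
      · rw [Function.update_of_ne hwz]
        obtain ⟨h1, h2⟩ := hc w (hz w hw hwz)
        refine ⟨h1, fun w' hw' hadj => ?_⟩
        by_cases hw'z : w' = z
        · subst hw'z
          rw [Function.update_self]
          exact ha' w.succ hadj.symm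
        · rw [Function.update_of_ne hw'z]
          exact h2 w' (hz w' hw' hw'z) hadj
  obtain ⟨c, hc⟩ := main m le_rfl
  refine ⟨Coloring.mk (Sum.elim id c) ?_⟩
  rintro (a | w) (a' | w') h
  · exact h
  · obtain ⟨h1, h2⟩ := h
    subst h2
    exact (hc w' w'.2).1 h1
  · obtain ⟨h1, h2⟩ := h
    subst h2
    exact ((hc w w.2).1 h1).symm
  · exact (hc w w.2).2 w' w'.2 h

lemma blow_chrom [DecidableRel H.Adj] (hd : ∀ u, H.degree u < k) :
    (blow H f).chromaticNumber = k := by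
  apply le_antisymm
  · exact (blow_color H f hd).chromaticNumber_le
  · let φ : (⊤ : SimpleGraph (Fin k)) →g blow H f :=
      { toFun := Sum.inl, map_rel' := fun {a b} h => h }
    have := chromaticNumber_mono_of_hom φ
    simpa using this

end blowup

/-- **Theorem 5 (sharpness).** For `k - 1 > ℓ > 1` and `ℓ ≤ n - k` there is an `n`-vertex
`k`-chromatic `ℓ`-connected graph with exactly `C(k,2) + ⌈(n-k+1)ℓ/2⌉` edges. -/
theorem min_edges_le_case_sharp (n k ℓ : ℕ)
    (hℓk : ℓ + 1 < k) (hℓ : 1 < ℓ) (hn : k + ℓ ≤ n) :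
    ∃ G : SimpleGraph (Fin n),
      G.chromaticNumber = k ∧ LConnected G ℓ ∧
        Nat.card G.edgeSet = Nat.choose k 2 + ((n - k + 1) * ℓ + 1) / 2 := by
  classical
  obtain ⟨m, rfl⟩ : ∃ m, n = k + m := ⟨n - k, by omega⟩
  have hm : ℓ ≤ m := by omega
  obtain ⟨H, hc, hE⟩ : ∃ H : SimpleGraph (Fin (m + 1)), (∀ s : Finset (Fin (m + 1)), s.card < ℓ → CA H s) ∧
      Nat.card H.edgeSet ≤ ((m + 1) * ℓ + 1) / 2 := exists_harary m ℓ hℓ hm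
  have hmin := min_deg H ℓ (by simp; omega) hc
  have hsum := H.sum_degrees_eq_twice_card_edges
  rw [edgeFinset_card, ← Nat.card_eq_fintype_card] at hsum
  have hdeg : ∀ u, H.degree u < k := by
    intro u
    have h1 := Finset.add_sum_erase Finset.univ (fun v => H.degree v) (Finset.mem_univ u)
    have h2 := Finset.card_nsmul_le_sum (Finset.univ.erase u) (fun v => H.degree v) ℓ
      (fun v _ => hmin v)
    rw [Finset.card_erase_of_mem (Finset.mem_univ u), Finset.card_univ, Fintype.card_fin,
      smul_eq_mul, Nat.add_sub_cancel] at h2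
    have h3 : (m + 1) * ℓ = m * ℓ + ℓ := by ring
    omega
  have hEq : Nat.card H.edgeSet = ((m + 1) * ℓ + 1) / 2 := by
    have h2 := Finset.card_nsmul_le_sum Finset.univ (fun v => H.degree v) ℓ
      (fun v _ => hmin v)
    rw [Finset.card_univ, Fintype.card_fin, smul_eq_mul] at h2
    omega
  obtain ⟨f, hf⟩ : ∃ f : Fin m → Fin k,
      ∀ w w', H.Adj 0 w.succ → H.Adj 0 w'.succ → f w = f w' → w = w' := by
    have hle : Fintype.card (H.neighborFinset 0) ≤ Fintype.card (Fin k) := by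
      rw [Fintype.card_coe, card_neighborFinset_eq_degree, Fintype.card_fin]
      exact (hdeg 0).le
    obtain ⟨e⟩ := Function.Embedding.nonempty_of_card_le hle
    refine ⟨fun w => if h : w.succ ∈ H.neighborFinset 0 then e ⟨w.succ, h⟩ else ⟨0, by omega⟩, ?_⟩
    intro w w' h h' heq
    have h1 : w.succ ∈ H.neighborFinset 0 := by simpa using h
    have h2 : w'.succ ∈ H.neighborFinset 0 := by simpa using h'
    simp only [h1, h2, dif_pos] at heq
    have := e.injective heq
    exact Fin.succ_injective _ (congrArg Subtype.val this)
  let φ := SimpleGraph.Iso.map (finSumFinEquiv (m := k) (n := m)) (blow H f)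
  refine ⟨(blow H f).map (finSumFinEquiv (m := k) (n := m)), ?_, ?_, ?_⟩
  · rw [← blow_chrom H f hdeg]
    exact le_antisymm (chromaticNumber_mono_of_hom φ.symm.toHom)
      (chromaticNumber_mono_of_hom φ.toHom)
  · exact LConnected_iso _ _ φ ℓ (by simp; omega) (fun S hS => blow_conn H f ℓ hm hc hf S hS)
  · rw [← Nat.card_congr φ.mapEdgeSet, blow_card, hEq]
    congr 4
    omega
end

section
/- If G is an n-vertex k-chromatic ℓ-connected simple graph with k − 1 > ℓ > 1 and ℓ > n − k, then the number of edges of G satisfies |E(G)| ≥ C(k,2) + C(n−k,2) + (n−k)·(ℓ − (n−k−1)). -/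
open SimpleGraph

namespace MinEdges
open Classical

variable {V : Type*} [Fintype V]

/-- Degree. -/
noncomputable def dg (F : SimpleGraph V) (a : V) : ℕ := (Finset.univ.filter (fun b => F.Adj a b)).card

/-- Isolate the vertex `v`. -/
def del (F : SimpleGraph V) (v : V) : SimpleGraph V where
  Adj a b := F.Adj a b ∧ a ≠ v ∧ b ≠ v
  symm := ⟨fun _ _ h => ⟨h.1.symm, h.2.2, h.2.1⟩⟩
  loopless := ⟨fun _ h => h.1.ne rfl⟩

/-- Sum of the degrees. -/
noncomputable def sd (F : SimpleGraph V) : ℕ := ∑ a, dg F a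

lemma dg_del_le (F : SimpleGraph V) (v a : V) : dg (del F v) a ≤ dg F a := by
  unfold dg
  apply Finset.card_le_card
  intro b hb
  simp only [Finset.mem_filter, Finset.mem_univ, true_and] at hb ⊢
  exact hb.1

lemma sd_le (F : SimpleGraph V) (v : V) : sd F ≤ sd (del F v) + 2 * dg F v := by
  have h1 : ∀ a, dg F a ≤ dg (del F v) a + (if F.Adj v a then 1 else 0)
      + (if a = v then dg F v else 0) := by
    intro a
    by_cases hav : a = v
    · subst hav; simp
    · simp only [hav, if_false, add_zero]
      have : (Finset.univ.filter (fun b => F.Adj a b)) ⊆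
          (Finset.univ.filter (fun b => (del F v).Adj a b)) ∪ (if F.Adj v a then {v} else ∅) := by
        intro b hb
        simp only [Finset.mem_filter, Finset.mem_univ, true_and, Finset.mem_union] at hb ⊢
        by_cases hb' : b = v
        · subst hb'; right; simp [hb.symm]
        · left; exact ⟨hb, hav, hb'⟩
      refine (Finset.card_le_card this).trans ((Finset.card_union_le _ _).trans ?_)
      unfold dg
      split_ifs <;> simp
  unfold sd
  refine (Finset.sum_le_sum (fun a _ => h1 a)).trans ?_
  rw [Finset.sum_add_distrib, Finset.sum_add_distrib]
  have : ∑ a, (if F.Adj v a then 1 else 0) = dg F v := by simp [dg]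
  rw [this]
  simp
  omega

/-- `σ` encodes a matching of `F`. -/
def IsM (F : SimpleGraph V) (σ : Equiv.Perm V) : Prop :=
  (∀ v, σ (σ v) = v) ∧ ∀ v, σ v ≠ v → F.Adj v (σ v)

lemma even_supp {F : SimpleGraph V} {σ : Equiv.Perm V} (h : IsM F σ) : 2 ∣ σ.support.card := by
  apply Equiv.Perm.two_dvd_card_support
  ext v
  simp [sq, h.1]

lemma exists_swap {F : SimpleGraph V} {σ τ : Equiv.Perm V} (hσ : IsM F σ) (hτ : IsM F τ)
    (O : Set V) (hO1 : ∀ v, v ∈ O → σ v ∈ O) (hO2 : ∀ v, v ∈ O → τ v ∈ O) :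
    ∃ ρ : Equiv.Perm V, IsM F ρ ∧ (∀ v ∈ O, ρ v = τ v) ∧ (∀ v, v ∉ O → ρ v = σ v) := by
  have hO1' : ∀ v, v ∉ O → σ v ∉ O := fun v hv h => hv (by simpa [hσ.1] using hO1 _ h)
  let f : V → V := fun v => if v ∈ O then τ v else σ v
  have hf : Function.Involutive f := by
    intro v
    by_cases hv : v ∈ O
    · simp [f, hv, hO2 v hv, hτ.1]
    · simp [f, hv, hO1' v hv, hσ.1]
  refine ⟨hf.toPerm, ⟨fun v => hf v, ?_⟩, ?_, ?_⟩
  · intro v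
    by_cases hv : v ∈ O
    · simpa [f, hv] using hτ.2 v
    · simpa [f, hv] using hσ.2 v
  · intro v hv; simp [f, hv]
  · intro v hv; simp [f, hv]

lemma orbit_lemma (σ τ : Equiv.Perm V) (hσ : ∀ v, σ (σ v) = v) (hτ : ∀ v, τ (τ v) = v)
    (y : V) (hy : τ y = y) :
    ∃ O : Set V, y ∈ O ∧ (∀ v, v ∈ O → σ v ∈ O) ∧ (∀ v, v ∈ O → τ v ∈ O) ∧
      ∀ x z, x ∈ O → z ∈ O → σ x = x → σ z = z → x = z := by
  set ρ := σ * τ with hρ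
  have hσi : σ⁻¹ = σ := by ext v; rw [Equiv.Perm.inv_eq_iff_eq, hσ]
  have hτi : τ⁻¹ = τ := by ext v; rw [Equiv.Perm.inv_eq_iff_eq, hτ]
  have hinv : ρ⁻¹ = τ * σ := by rw [hρ, mul_inv_rev, hσi, hτi]
  have hττ : τ * τ = 1 := by ext v; simp [hτ]
  have hσσ : σ * σ = 1 := by ext v; simp [hσ]
  have hc : τ * ρ * τ⁻¹ = ρ⁻¹ := by
    rw [hinv, hρ, hτi]
    calc τ * (σ * τ) * τ = τ * σ * (τ * τ) := by group
      _ = _ := by rw [hττ, mul_one]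
  have hτρ : ∀ i : ℤ, τ ((ρ ^ i) y) = (ρ ^ (-i)) y := by
    intro i
    have : τ * ρ ^ i * τ⁻¹ = ρ ^ (-i) := by
      rw [← conj_zpow, hc, inv_zpow, zpow_neg]
    have h2 := congrArg (fun p : Equiv.Perm V => p y) this
    simp only [Equiv.Perm.mul_apply, hτi, hy] at h2
    exact h2
  have hσe : σ = ρ * τ := by rw [hρ, mul_assoc, hττ, mul_one]
  have hσρ : ∀ i : ℤ, σ ((ρ ^ i) y) = (ρ ^ (1 - i)) y := by
    intro i
    have : σ ((ρ ^ i) y) = ρ (τ ((ρ ^ i) y)) := by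
      conv_lhs => rw [hσe]
      rfl
    rw [this, hτρ, ← Equiv.Perm.mul_apply, ← zpow_one_add]
    rfl
  refine ⟨{v | ∃ i : ℤ, (ρ ^ i) y = v}, ⟨0, by simp⟩, ?_, ?_, ?_⟩
  · rintro v ⟨i, rfl⟩; exact ⟨1 - i, (hσρ i).symm⟩
  · rintro v ⟨i, rfl⟩; exact ⟨- i, (hτρ i).symm⟩
  · rintro x z ⟨i, rfl⟩ ⟨j, rfl⟩ hx hz
    rw [hσρ] at hx hz
    have key : ∀ a b : ℤ, (ρ ^ a) y = (ρ ^ b) y → (ρ ^ (b - a)) y = y := by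
      intro a b h
      rw [sub_eq_neg_add, zpow_add, Equiv.Perm.mul_apply, ← h, ← Equiv.Perm.mul_apply,
        ← zpow_add]
      simp
    have kx := key _ _ hx
    have kz := key _ _ hz
    have mulp : ∀ a t : ℤ, (ρ ^ a) y = y → (ρ ^ (a * t)) y = y := by
      intro a t h
      rw [zpow_mul]
      exact Equiv.Perm.zpow_apply_eq_self_of_apply_eq_self h t
    have a1 := mulp _ (1 - (i - j)) kx
    have a2 := mulp _ (i - j) kx
    have e : j - i = (i - (1 - i)) * (-(j - i)) + ((j - (1 - j)) - (i - (1 - i))) * i := by ring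
    have a3 : (ρ ^ ((i - (1 - i)) * (-(j - i)))) y = y := mulp _ _ kx
    have a4 : (ρ ^ ((j - (1 - j)) - (i - (1 - i)))) y = y := key _ _ (kx.trans kz.symm)
    have a5 := mulp _ i a4
    have a6 : (ρ ^ (j - i)) y = y := by
      rw [e, zpow_add, Equiv.Perm.mul_apply, a5, a3]
    have : j = i + (j - i) := by ring
    rw [this, zpow_add, Equiv.Perm.mul_apply, a6]

/-- A form of the bound `e ≤ ν (Δ + 1)`. -/
lemma lemM (D : ℕ) (N : ℕ) : ∀ (F : SimpleGraph V), (∀ v, dg F v ≤ D) →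
    (∀ σ, IsM F σ → σ.support.card ≤ 2 * N) → sd F ≤ 2 * N * (D + 1) := by
  induction N with
  | zero =>
    intro F _ hM
    have : ∀ a, dg F a = 0 := by
      intro a
      by_contra h
      obtain ⟨b, hb⟩ := Finset.card_pos.mp (Nat.pos_of_ne_zero h)
      simp only [Finset.mem_filter, Finset.mem_univ, true_and] at hb
      have := hM (Equiv.swap a b) ⟨fun v => by simp, fun v hv => by
        by_cases h1 : v = a
        · subst h1; simpa using hb
        · by_cases h2 : v = b
          · subst h2; simpa using hb.symm
          · exact absurd (Equiv.swap_apply_of_ne_of_ne h1 h2) hv⟩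
      rw [Equiv.Perm.card_support_swap hb.ne] at this
      omega
    simp [sd, this]
  | succ N ih =>
    intro F hD hM
    by_cases hcase : ∃ v, ∀ σ, IsM (del F v) σ → σ.support.card ≤ 2 * N
    · obtain ⟨v, hv⟩ := hcase
      have h1 := ih (del F v) (fun a => (dg_del_le F v a).trans (hD a)) hv
      have h2 := sd_le F v
      have h3 := hD v
      nlinarith
    · push Not at hcase
      have hmiss : ∀ v, ∃ σ, IsM F σ ∧ σ.support.card = 2 * (N + 1) ∧ σ v = v := by
        intro v
        obtain ⟨σ, hσ, hs⟩ := hcase v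
        have hF : IsM F σ := ⟨hσ.1, fun w hw => (hσ.2 w hw).1⟩
        refine ⟨σ, hF, ?_, ?_⟩
        · have := even_supp hF
          have := hM σ hF
          omega
        · by_contra h
          exact (hσ.2 v h).2.1 rfl
      -- no maximum matching misses two adjacent vertices
      have hadj : ∀ a b, F.Adj a b → ∀ σ, IsM F σ → σ.support.card = 2 * (N + 1) →
          σ a = a → σ b ≠ b := by
        intro a b hab σ hσ hs ha hb
        have hsw : IsM F (Equiv.swap a b) := ⟨fun v => by simp, fun v hv => by
          by_cases h1 : v = a
          · subst h1; simpa using hab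
          · by_cases h2 : v = b
            · subst h2; simpa using hab.symm
            · exact absurd (Equiv.swap_apply_of_ne_of_ne h1 h2) hv⟩
        obtain ⟨ρ, hρ, h1, h2⟩ := exists_swap hσ hsw {a, b}
          (by rintro v (rfl | rfl) <;> simp [ha, hb])
          (by rintro v (rfl | rfl) <;> simp)
        have hlt : σ.support ⊂ ρ.support := by
          rw [Finset.ssubset_iff_of_subset]
          · refine ⟨a, ?_, by simpa using ha⟩
            rw [Equiv.Perm.mem_support, h1 a (by simp)]
            simpa using hab.ne'
          · intro v hv
            rw [Equiv.Perm.mem_support] at hv ⊢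
            rw [h2 v]
            · exact hv
            · rintro (rfl | rfl)
              · exact hv ha
              · exact hv hb
        have := Finset.card_lt_card hlt
        have := hM ρ hρ
        omega
      let R : V → V → Prop := fun x y => x = y ∨ ∀ σ, IsM F σ → σ.support.card = 2 * (N + 1) →
          σ x = x → σ y ≠ y
      have hRsymm : ∀ x y, R x y → R y x := by
        rintro x y (h | h)
        · exact Or.inl h.symm
        · exact Or.inr fun σ hσ hs hy hx => h σ hσ hs hx hy
      have hRtrans : ∀ x y z, R x y → R y z → R x z := by
        rintro x y z (rfl | hxy) h2
        · exact h2
        rcases h2 with rfl | hyz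
        · exact Or.inr hxy
        by_cases hxz : x = z
        · exact Or.inl hxz
        right
        intro σ hσ hs hx hz
        obtain ⟨τ, hτ, hts, hy⟩ := hmiss y
        obtain ⟨O, hyO, hO1, hO2, hO3⟩ := orbit_lemma σ τ hσ.1 hτ.1 y hy
        obtain ⟨ρ, hρ, r1, r2⟩ := exists_swap hσ hτ O hO1 hO2
        obtain ⟨π, hπ, p1, p2⟩ := exists_swap hτ hσ O hO2 hO1
        have hsum : ρ.support.card + π.support.card = σ.support.card + τ.support.card := by
          simp only [Equiv.Perm.support, Finset.card_filter]
          rw [← Finset.sum_add_distrib, ← Finset.sum_add_distrib]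
          apply Finset.sum_congr rfl
          intro v _
          by_cases hv : v ∈ O
          · rw [r1 v hv, p1 v hv, add_comm]
          · rw [r2 v hv, p2 v hv]
        have b1 := hM ρ hρ
        have b2 := hM π hπ
        have hρs : ρ.support.card = 2 * (N + 1) := by omega
        have hρy : ρ y = y := by rw [r1 y hyO, hy]
        by_cases hxO : x ∈ O
        · have hzO : z ∉ O := fun h => hxz (hO3 x z hxO h hx hz)
          exact hyz ρ hρ hρs hρy (by rw [r2 z hzO, hz])
        · exact hxy ρ hρ hρs (by rw [r2 x hxO, hx]) hρy
      let S : Setoid V := ⟨R, fun x => Or.inl rfl, fun {x y} => hRsymm x y,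
        fun {x y z} => hRtrans x y z⟩
      have hadjR : ∀ a b, F.Adj a b → R a b := fun a b h => Or.inr (hadj a b h)
      rcases isEmpty_or_nonempty V with hV | ⟨⟨v0⟩⟩
      · simp [sd]
      obtain ⟨σ, hσ, hs, -⟩ := hmiss v0
      rw [← hs]
      have hq : ∀ q : Quotient S,
          ∑ a ∈ Finset.univ.filter (fun a => (⟦a⟧ : Quotient S) = q), dg F a ≤
          (σ.support.filter (fun a => (⟦a⟧ : Quotient S) = q)).card * (D + 1) := by
        intro q
        set Q := Finset.univ.filter (fun a => (⟦a⟧ : Quotient S) = q) with hQ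
        have hfix : (Q.filter (fun a => σ a = a)).card ≤ 1 := by
          rw [Finset.card_le_one]
          intro a ha b hb
          simp only [hQ, Finset.mem_filter, Finset.mem_univ, true_and] at ha hb
          have hab : R a b := Quotient.exact (ha.1.trans hb.1.symm)
          rcases hab with h | h
          · exact h
          · exact absurd hb.2 (h σ hσ hs ha.2)
        have hsplit := Finset.card_filter_add_card_filter_not (s := Q) (fun a => σ a = a)
        have heq : Q.filter (fun a => ¬ σ a = a) =
            σ.support.filter (fun a => (⟦a⟧ : Quotient S) = q) := by
          ext a; simp [hQ, and_comm]
        rw [heq] at hsplit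
        set s := (σ.support.filter (fun a => (⟦a⟧ : Quotient S) = q)).card
        have hdeg : ∀ a ∈ Q, dg F a ≤ Q.card - 1 := by
          intro a ha
          rw [← Finset.card_erase_of_mem ha]
          apply Finset.card_le_card
          intro b hb
          simp only [hQ, Finset.mem_filter, Finset.mem_univ, true_and, Finset.mem_erase] at ha hb ⊢
          refine ⟨hb.ne', ?_⟩
          rw [← ha]
          exact Quotient.sound (hRsymm _ _ (hadjR _ _ hb))
        have k1 := Finset.sum_le_card_nsmul Q (dg F) _ hdeg
        have k2 := Finset.sum_le_card_nsmul Q (dg F) D (fun a _ => hD a)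
        simp only [smul_eq_mul] at k1 k2
        have hsq : Q.card ≤ s + 1 := by omega
        rcases Nat.eq_zero_or_pos Q.card with h0 | h0
        · rw [h0, zero_mul] at k2
          exact k2.trans (Nat.zero_le _)
        obtain ⟨t, ht⟩ : ∃ t, Q.card = t + 1 := ⟨Q.card - 1, by omega⟩
        rw [ht] at k1 k2 hsq
        have hst : t * (D + 1) ≤ s * (D + 1) := Nat.mul_le_mul_right _ (by omega)
        refine le_trans ?_ hst
        simp only [Nat.add_sub_cancel] at k1
        rcases le_total t D with h | h
        · nlinarith
        · nlinarith
      have e1 : sd F = ∑ q : Quotient S,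
          ∑ a ∈ Finset.univ.filter (fun a => (⟦a⟧ : Quotient S) = q), dg F a :=
        (Finset.sum_fiberwise _ _ _).symm
      have e2 : σ.support.card = ∑ q : Quotient S,
          (σ.support.filter (fun a => (⟦a⟧ : Quotient S) = q)).card :=
        Finset.card_eq_sum_card_fiberwise (fun _ _ => Finset.mem_coe.mpr (Finset.mem_univ _))
      rw [e1, e2, Finset.sum_mul]
      exact Finset.sum_le_sum fun q _ => hq q

/-- `c` is a partition of the vertices into cliques of `F`. -/
def IsC (F : SimpleGraph V) (c : V → Finset V) : Prop := ∀ u w, u ≠ w → c u = c w → F.Adj u w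

lemma matching_bound {F : SimpleGraph V} {p : ℕ}
    (hP : ∀ c, IsC F c → Fintype.card V ≤ (Finset.univ.image c).card + p)
    (σ : Equiv.Perm V) (hσ : IsM F σ) : σ.support.card ≤ 2 * p := by
  let c : V → Finset V := fun v => {v, σ v}
  have hcσ : ∀ v, c (σ v) = c v := by
    intro v; simp [c, hσ.1, Finset.pair_comm]
  have hc : IsC F c := by
    intro u w huw h
    have : w ∈ c u := by rw [h]; simp [c]
    simp only [c, Finset.mem_insert, Finset.mem_singleton] at this
    rcases this with h | h
    · exact absurd h.symm huw
    · rw [h]; exact hσ.2 u (by rw [← h]; exact huw.symm)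
  have h1 := hP c hc
  have h2 : (Finset.univ.image c).card ≤ (σ.support.image c).card + (σ.supportᶜ).card := by
    rw [← Finset.union_compl σ.support, Finset.image_union]
    refine (Finset.card_union_le _ _).trans ?_
    have := Finset.card_image_le (s := σ.supportᶜ) (f := c)
    omega
  have h3 : (σ.support.image c).card * 2 ≤ σ.support.card := by
    rw [Finset.card_eq_sum_card_image c σ.support]
    rw [← smul_eq_mul]
    apply Finset.card_nsmul_le_sum
    intro q hq
    obtain ⟨v, hv, rfl⟩ := Finset.mem_image.mp hq
    have hv' : σ v ≠ v := by simpa using hv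
    rw [← Finset.card_pair hv'.symm]
    apply Finset.card_le_card
    intro w hw
    simp only [Finset.mem_insert, Finset.mem_singleton] at hw
    rcases hw with rfl | rfl
    · simp [hv']
    · simp [hv', hcσ]
  have h4 := Finset.card_compl σ.support
  have h5 := Finset.card_le_univ σ.support
  omega

lemma claimA (d : ℕ) (p : ℕ) : ∀ F : SimpleGraph V, (∀ v, dg F v ≤ d) → p + 1 ≤ d →
    (∀ c, IsC F c → Fintype.card V ≤ (Finset.univ.image c).card + p) → sd F ≤ 2 * (p * d) := by
  induction p with
  | zero =>
    intro F hd hpd hP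
    have := lemM d 0 F hd (matching_bound hP)
    simpa using this
  | succ p ih =>
    intro F hd hpd hP
    by_cases hcase : ∃ v, ∀ c, IsC (del F v) c →
        Fintype.card V ≤ (Finset.univ.image c).card + p
    · obtain ⟨v, hv⟩ := hcase
      have h1 := ih (del F v) (fun a => (dg_del_le F v a).trans (hd a)) (by omega) hv
      have h2 := sd_le F v
      have h3 := hd v
      nlinarith
    · push Not at hcase
      have hdeg : ∀ v, dg F v ≤ p + 1 := by
        intro v
        obtain ⟨c, hc, hlt⟩ := hcase v
        have hcF : IsC F c := fun u w h1 h2 => (hc u w h1 h2).1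
        have hsing : ∀ u, c u = c v → u = v := by
          intro u hu
          by_contra h
          exact (hc u v h hu).2.2 rfl
        have himg : Finset.univ.image c ⊆
            (Finset.univ.filter (fun b => ¬ F.Adj v b)).image c := by
          intro q hq
          obtain ⟨w, -, rfl⟩ := Finset.mem_image.mp hq
          by_contra hcon
          have hall : ∀ u, c u = c w → F.Adj v u := by
            intro u hu
            by_contra hnu
            exact hcon (Finset.mem_image.mpr ⟨u, by simp [hnu], hu⟩)
          have hvw : c v ≠ c w := fun h => F.irrefl (hall v h)
          let c' : V → Finset V := fun u => if u = v then c w else c u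
          have hc' : IsC F c' := by
            intro a b hab h
            by_cases ha : a = v
            · subst ha
              simp only [c', if_true, if_neg hab.symm] at h
              exact hall b h.symm
            · by_cases hb : b = v
              · subst hb
                simp only [c', if_true, if_neg hab] at h
                exact (hall a h).symm
              · simp only [c', if_neg ha, if_neg hb] at h
                exact hcF a b hab h
          have hsub : Finset.univ.image c' ⊆ (Finset.univ.image c).erase (c v) := by
            intro q hq
            obtain ⟨u, -, rfl⟩ := Finset.mem_image.mp hq
            rw [Finset.mem_erase]
            by_cases hu : u = v
            · subst hu; simp [c', hvw.symm]
            · simp only [c', if_neg hu]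
              exact ⟨fun h => hu (hsing u h), by simp⟩
          have g1 := Finset.card_le_card hsub
          rw [Finset.card_erase_of_mem (by simp)] at g1
          have g2 := hP c' hc'
          have g3 : 0 < (Finset.univ.image c).card := Finset.card_pos.mpr ⟨c v, by simp⟩
          omega
        have g1 := (Finset.card_le_card himg).trans Finset.card_image_le
        have g2 := Finset.card_filter_add_card_filter_not (s := (Finset.univ : Finset V))
          (fun b => F.Adj v b)
        have g3 := hP c hcF
        rw [Finset.card_univ] at g2
        unfold dg
        omega
      have h1 := lemM (p + 1) (p + 1) F hdeg (matching_bound hP)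
      nlinarith

lemma dg_ge {G : SimpleGraph V} {ℓ : ℕ} (hconn : LConnected G ℓ) (v : V) : ℓ ≤ dg G v := by
  by_contra! h
  set s := Finset.univ.filter (fun b => G.Adj v b) with hs
  have h' : s.card < ℓ := h
  have hc := hconn.2 s h'
  have hlt : (insert v s).card < Fintype.card V := by
    have := Finset.card_insert_le v s
    have := hconn.1
    omega
  obtain ⟨w, hw⟩ : ∃ w, w ∉ insert v s := by
    by_contra! hcon
    rw [Finset.eq_univ_iff_forall.mpr hcon, Finset.card_univ] at hlt
    exact lt_irrefl _ hlt
  simp only [Finset.mem_insert, not_or] at hw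
  have hvs : v ∉ s := by simp [hs]
  let v' : ((↑s : Set V)ᶜ : Set V) := ⟨v, by simpa using hvs⟩
  let w' : ((↑s : Set V)ᶜ : Set V) := ⟨w, by simpa using hw.2⟩
  have hne : v' ≠ w' := fun h => hw.1 (congrArg Subtype.val h).symm
  obtain ⟨P⟩ := hc.preconnected v' w'
  have key : ∀ x y, (G.induce ((↑s : Set V)ᶜ)).Walk x y → x ≠ y →
      ∃ u, (G.induce ((↑s : Set V)ᶜ)).Adj x u := by
    intro x y P hxy
    cases P with
    | nil => exact absurd rfl hxy
    | cons hadj _ => exact ⟨_, hadj⟩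
  obtain ⟨u, hu⟩ := key _ _ P hne
  have h1 : G.Adj v u.1 := hu
  exact u.2 (by simp [hs, h1])

lemma sd_eq (G : SimpleGraph V) : sd G = 2 * Nat.card G.edgeSet := by
  have := G.sum_degrees_eq_twice_card_edges
  rw [Nat.card_eq_fintype_card, ← SimpleGraph.edgeFinset_card, ← this]
  unfold sd dg
  apply Finset.sum_congr rfl
  intro v _
  rw [← SimpleGraph.card_neighborFinset_eq_degree]
  congr 1
  ext b; simp

lemma dg_compl (G : SimpleGraph V) (v : V) : dg G v + dg Gᶜ v + 1 = Fintype.card V := by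
  have g2 := Finset.card_filter_add_card_filter_not (s := (Finset.univ : Finset V))
          (fun b => G.Adj v b)
  rw [Finset.card_univ] at g2
  have : Finset.univ.filter (fun b => ¬ G.Adj v b) =
      insert v (Finset.univ.filter (fun b => Gᶜ.Adj v b)) := by
    ext b
    simp only [Finset.mem_filter, Finset.mem_univ, true_and, Finset.mem_insert,
      SimpleGraph.compl_adj]
    by_cases h : b = v
    · subst h; simp
    · simp [h, Ne.symm h]
  rw [this, Finset.card_insert_of_notMem (by simp)] at g2
  have e1 : dg G v = (Finset.univ.filter (fun b => G.Adj v b)).card := rfl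
  have e2 : dg Gᶜ v = (Finset.univ.filter (fun b => Gᶜ.Adj v b)).card := by
    unfold dg; congr
  omega

end MinEdges

/-- **Theorem 6 (lower bound).** If `G` is an `n`-vertex `k`-chromatic `ℓ`-connected graph with
`k - 1 > ℓ > 1` and `ℓ > n - k`, then
`|E(G)| ≥ C(k,2) + C(n-k,2) + (n-k)(ℓ - (n-k-1))`. -/
theorem min_edges_gt_case {V : Type*} [Fintype V] (n k ℓ : ℕ)
    (hℓk : ℓ + 1 < k) (hℓ : 1 < ℓ) (hn : n < k + ℓ)
    (G : SimpleGraph V) (hcard : Fintype.card V = n)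
    (hchrom : G.chromaticNumber = k) (hconn : LConnected G ℓ) :
    Nat.choose k 2 + Nat.choose (n - k) 2 + (n - k) * (ℓ - (n - k - 1)) ≤
      Nat.card G.edgeSet := by
  classical
  have hkn : ∀ j, G.Colorable j → k ≤ j := by
    intro j hj
    have := hj.chromaticNumber_le
    rw [hchrom] at this
    exact_mod_cast this
  have hk : k ≤ n := hkn n (hcard ▸ G.colorable_of_fintype)
  obtain ⟨m, rfl⟩ : ∃ m, n = k + m := ⟨n - k, by omega⟩
  have hm : m < ℓ := by omega
  obtain ⟨d, hd⟩ : ∃ d, k + m = d + 1 + ℓ := ⟨k + m - 1 - ℓ, by omega⟩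
  have hcl := fun v => MinEdges.dg_compl G v
  have hF := MinEdges.claimA d m Gᶜ
    (fun v => by have := hcl v; have := MinEdges.dg_ge hconn v; omega) (by omega)
    (by
      intro c hc
      have hcol : G.Colorable (Finset.univ.image c).card := by
        let C : G.Coloring (Finset.univ.image c) := SimpleGraph.Coloring.mk
          (fun v => ⟨c v, by simp⟩) (by
            intro u w huw h
            have h' : c u = c w := congrArg Subtype.val h
            exact (hc u w huw.ne h').2 huw)
        have := C.colorable
        rwa [Fintype.card_coe] at this
      have := hkn _ hcol
      convert (show Fintype.card V ≤ (Finset.univ.image c).card + m by omega))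
  have hsum : MinEdges.sd G + MinEdges.sd Gᶜ + (k + m) = (k + m) * (k + m) := by
    unfold MinEdges.sd
    rw [← Finset.sum_add_distrib]
    have : ∑ v : V, (MinEdges.dg G v + MinEdges.dg Gᶜ v + 1) = (k + m) * (k + m) := by
      rw [Finset.sum_congr rfl (fun v _ => hcl v)]
      simp [hcard]
    rw [Finset.sum_add_distrib] at this
    simpa [hcard] using this
  rw [MinEdges.sd_eq G] at hsum
  set e := Nat.card G.edgeSet
  rw [Nat.add_sub_cancel_left]
  have c1 : ∀ a : ℕ, 2 * a.choose 2 + a = a * a := by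
    intro a
    induction a with
    | zero => rfl
    | succ a ih =>
      rw [Nat.choose_succ_succ' a 1, Nat.choose_one_right]
      nlinarith
  have ck := c1 k
  have cm := c1 m
  rcases Nat.eq_zero_or_pos m with h0 | h0
  · subst h0
    simp at hF hsum ⊢
    nlinarith
  obtain ⟨t, ht⟩ : ∃ t, ℓ = t + (m - 1) := ⟨ℓ - (m - 1), by omega⟩
  have ht' : ℓ - (m - 1) = t := by omega
  rw [ht']
  have hdk : d + t = k := by omega
  have hmul : m * d + m * t = m * k := by
    rw [← Nat.mul_add, hdk]
  nlinarith
end
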